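/- Let H be a graph with a cut vertex v whose removal results in the disjoint union of two (possibly disconnected) subgraphs H' and H''. Let D be a divisor on the subgraph H'' ∪ {v} of rank r as a divisor on H'' ∪ {v}, and let F be an effective divisor on H such that D ≤ F|_{H'' ∪ {v}}. Then for every effective divisor E of degree r supported on H'' ∪ {v}, the divisor F - E is linearly equivalent to an effective divisor on H. -/

import Mathlib

open Finset

variable {V : Type*} [Fintype V] [DecidableEq V]

/-- A finite loopless multigraph on vertex type `V`, given by symmetric edge multiplicities. -/
structure Multigraph (V : Type*) [Fintype V] [DecidableEq V] where
  mult : V → V → ℕ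
  symm : ∀ u v, mult u v = mult v u
  loopless : ∀ v, mult v v = 0

namespace Multigraph

def Adj (G : Multigraph V) (u v : V) : Prop := 0 < G.mult u v

/-- A graph is connected. -/
def Connected (G : Multigraph V) : Prop :=
  Nonempty V ∧ ∀ u v : V, Relation.ReflTransGen G.Adj u v

/-- Valence of a vertex. -/
def valence (G : Multigraph V) (v : V) : ℕ := ∑ u, G.mult v u

/-- The Laplacian applied to an integer-valued function on the vertices. -/
def laplacian (G : Multigraph V) (f : V → ℤ) : V → ℤ :=
  fun w => ∑ u, (G.mult w u : ℤ) * (f w - f u)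

/-- Degree of a divisor. -/
def degree (D : V → ℤ) : ℤ := ∑ v, D v

/-- A divisor is effective if all coefficients are nonnegative. -/
def Effective (D : V → ℤ) : Prop := ∀ v, 0 ≤ D v

/-- Linear equivalence of divisors: they differ by a sequence of chip-firing moves,
equivalently by a Laplacian of an integer function. -/
def LinEquiv (G : Multigraph V) (D D' : V → ℤ) : Prop :=
  ∃ f : V → ℤ, D' = D - G.laplacian f

/-- A divisor is winnable if it is linearly equivalent to an effective divisor. -/
def Winnable (G : Multigraph V) (D : V → ℤ) : Prop :=
  ∃ E : V → ℤ, Effective E ∧ G.LinEquiv D E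

/-- The Baker–Norine rank of a divisor: the largest `r` such that `D - E` is winnable for
every effective divisor `E` of degree `r` (the defining set contains all negative integers,
and its supremum is `-1` precisely when `D` itself is not winnable). -/
noncomputable def rank (G : Multigraph V) (D : V → ℤ) : ℤ :=
  sSup {r : ℤ | ∀ E : V → ℤ, Effective E → degree E = r → G.Winnable (fun w => D w - E w)}

/-- The `k`-th gonality of a graph: the smallest degree of a divisor of rank `k`. -/
noncomputable def gonality (G : Multigraph V) (k : ℤ) : ℤ :=
  sInf {d : ℤ | ∃ D : V → ℤ, G.rank D = k ∧ degree D = d}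

/-- A graph is gonality-tight if its second gonality exceeds its first by exactly 1. -/
def GonalityTight (G : Multigraph V) : Prop :=
  G.gonality 2 = G.gonality 1 + 1

/-- A divisor realises the `k`-th gonality if it has rank `k` and degree `gon_k(G)`. -/
def Realises (G : Multigraph V) (k : ℤ) (D : V → ℤ) : Prop :=
  G.rank D = k ∧ degree D = G.gonality k

/-- A divisor is `v`-reduced: nonnegative away from `v`, and set-firing any nonempty set of
vertices not containing `v` creates a negative coefficient inside the set. -/
def Reduced (G : Multigraph V) (v : V) (D : V → ℤ) : Prop :=
  (∀ w, w ≠ v → 0 ≤ D w) ∧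
    ∀ U : Finset V, U.Nonempty → v ∉ U →
      ∃ w ∈ U, D w - ∑ u ∈ Uᶜ, (G.mult w u : ℤ) < 0

/-- The genus (first Betti number) of a graph: `|E| - |V| + 1`. -/
def genus (G : Multigraph V) : ℤ :=
  ((∑ u, ∑ v, G.mult u v : ℕ) : ℤ) / 2 - Fintype.card V + 1

/-- The canonical divisor of a graph. -/
def canonical (G : Multigraph V) : V → ℤ :=
  fun w => (G.valence w : ℤ) - 2

/-- The subgraph induced on a set `S` of vertices (with all edges among `S`). -/
def induce (G : Multigraph V) (S : Finset V) : Multigraph {x // x ∈ S} where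
  mult a b := G.mult a b
  symm a b := G.symm a b
  loopless a := G.loopless a

/-- `G.SeparatedBy u w v` means every path from `w` to `v` passes through `u`. -/
def SeparatedBy (G : Multigraph V) (u w v : V) : Prop :=
  ¬ Relation.ReflTransGen (fun x y => G.Adj x y ∧ x ≠ u ∧ y ≠ u) w v

end Multigraph

/-- Size of the `i`-th level of a quasi-banana graph: level `0` has a single vertex. -/
def qbSize (q : ℕ → ℕ) (i : ℕ) : ℕ := if i = 0 then 1 else q i

/-- `ℓ` is a quasi-banana labelling of `G` exhibiting `G ≅ QB_m(q_1, …, q_m)`: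
`ℓ` is a bijection onto the pairs `(i, j)` with `i ≤ m`, `1 ≤ j ≤ qbSize q i`
(vertex `u_{i,j}` is the vertex labelled `(i,j)`), and the edge multiplicities are:
one edge between distinct vertices of the same level, `(∑_{k=1}^{i} q_k) + 2` edges
between `u_{i,1}` and each `u_{i+1,j}`, and no other edges. -/
def Multigraph.IsQBLabelling (G : Multigraph V) (m : ℕ) (q : ℕ → ℕ) (ℓ : V → ℕ × ℕ) : Prop :=
  (∀ i, 1 ≤ i → i ≤ m → 0 < q i) ∧
  Function.Injective ℓ ∧
  (∀ v : V, (ℓ v).1 ≤ m ∧ 1 ≤ (ℓ v).2 ∧ (ℓ v).2 ≤ qbSize q (ℓ v).1) ∧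
  (∀ i j : ℕ, i ≤ m → 1 ≤ j → j ≤ qbSize q i → ∃ v, ℓ v = (i, j)) ∧
  (∀ v w : V, v ≠ w → G.mult v w =
    if (ℓ v).1 = (ℓ w).1 then 1
    else if (ℓ v).1 + 1 = (ℓ w).1 ∧ (ℓ v).2 = 1 then (∑ i ∈ Finset.Icc 1 (ℓ v).1, q i) + 2
    else if (ℓ w).1 + 1 = (ℓ v).1 ∧ (ℓ w).2 = 1 then (∑ i ∈ Finset.Icc 1 (ℓ w).1, q i) + 2
    else 0)

/-- A graph is a quasi-banana graph if it is isomorphic to some `QB_m(N)`. -/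
def Multigraph.IsQuasiBanana (G : Multigraph V) : Prop :=
  ∃ (m : ℕ) (q : ℕ → ℕ) (ℓ : V → ℕ × ℕ), G.IsQBLabelling m q ℓ

/-- The graph obtained from `G'` by attaching a complete graph `K_n`: `n` new vertices
pairwise joined by exactly one edge, each joined to `v` by exactly `k+1` edges. -/
def attachComplete (G' : Multigraph V) (v : V) (k n : ℕ) : Multigraph (V ⊕ Fin n) where
  mult x y :=
    match x, y with
    | Sum.inl a, Sum.inl b => G'.mult a b
    | Sum.inl a, Sum.inr _ => if a = v then k + 1 else 0
    | Sum.inr _, Sum.inl b => if b = v then k + 1 else 0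
    | Sum.inr i, Sum.inr j => if i = j then 0 else 1
  symm := by
    rintro (a | i) (b | j)
    · exact G'.symm a b
    · rfl
    · rfl
    · by_cases h : i = j
      · simp [h]
      · simp [h, Ne.symm h]
  loopless := by
    rintro (a | i)
    · exact G'.loopless a
    · simp

theorem degree_laplacian_zero {W : Type*} [Fintype W] [DecidableEq W] (G : Multigraph W)
    (f : W → ℤ) : ∑ w, G.laplacian f w = 0 := by
  have h : ∑ w, G.laplacian f w = - ∑ w, G.laplacian f w := by
    unfold Multigraph.laplacian
    conv_lhs => rw [Finset.sum_comm]
    rw [← Finset.sum_neg_distrib]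
    refine Finset.sum_congr rfl fun a _ => ?_
    rw [← Finset.sum_neg_distrib]
    refine Finset.sum_congr rfl fun b _ => ?_
    rw [G.symm b a]
    ring
  linarith

theorem winnable_of_rank {W : Type*} [Fintype W] [DecidableEq W] (G : Multigraph W) (x : W)
    (D E : W → ℤ) (hE : Multigraph.Effective E) (hd : Multigraph.degree E = G.rank D) :
    G.Winnable (fun w => D w - E w) := by
  have key : G.rank D ∈ {r : ℤ | ∀ E : W → ℤ, Multigraph.Effective E →
      Multigraph.degree E = r → G.Winnable (fun w => D w - E w)} := by
    unfold Multigraph.rank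
    apply Int.csSup_mem
    · refine ⟨-1, fun E hE hd => ?_⟩
      have : 0 ≤ Multigraph.degree E := Finset.sum_nonneg fun i _ => hE i
      omega
    · refine ⟨max 0 (Multigraph.degree D), fun r hr => ?_⟩
      by_contra hlt
      have hlt' := not_le.mp hlt
      have hr0 : 0 < r := lt_of_le_of_lt (le_max_left _ _) hlt'
      have hrD : Multigraph.degree D < r := lt_of_le_of_lt (le_max_right _ _) hlt'
      obtain ⟨E', hE', f, hf⟩ := hr (fun w => if w = x then r else 0)
        (fun w => by dsimp only; split_ifs <;> omega) (by simp [Multigraph.degree])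
      have h0 : 0 ≤ ∑ w, E' w := Finset.sum_nonneg fun i _ => hE' i
      rw [hf] at h0
      simp only [Pi.sub_apply, Finset.sum_sub_distrib, degree_laplacian_zero] at h0
      simp [Multigraph.degree] at h0 hrD
      omega
  exact key E hE hd

/-- If `v` is a cut vertex splitting `H` into `H'` (vertex set `A`) and
`H''` (vertex set `B`), `D` is a divisor of rank `r` on `H'' ∪ {v}`, and `F` is an effective
divisor on `H` with `D ≤ F|_{H'' ∪ {v}}`, then for every effective divisor `E` of degree `r`
supported on `H'' ∪ {v}`, the divisor `F - E` is winnable on `H`. -/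
theorem stmt8 (H : Multigraph V) (hH : H.Connected)
    (v : V) (A B : Finset V)
    (hAB : A ∪ B = Finset.univ.erase v) (hdisj : Disjoint A B)
    (hnoedge : ∀ a ∈ A, ∀ b ∈ B, H.mult a b = 0)
    (D : {x // x ∈ insert v B} → ℤ) (r : ℤ)
    (hD : (H.induce (insert v B)).rank D = r)
    (F : V → ℤ) (hF : Multigraph.Effective F)
    (hDF : ∀ x : {x // x ∈ insert v B}, D x ≤ F x.1)
    (E : V → ℤ) (hE : Multigraph.Effective E)
    (hEdeg : Multigraph.degree E = r)
    (hEsupp : ∀ w, w ∉ insert v B → E w = 0) :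
    H.Winnable (fun w => F w - E w) := by
  classical
  have hvS : v ∈ insert v B := Finset.mem_insert_self v B
  have hdeg : Multigraph.degree (fun x : {x // x ∈ insert v B} => E x.1)
      = (H.induce (insert v B)).rank D := by
    rw [hD, ← hEdeg]
    unfold Multigraph.degree
    rw [Finset.sum_coe_sort (insert v B) E]
    exact Finset.sum_subset (Finset.subset_univ _) fun w _ hw => hEsupp w hw
  obtain ⟨E', hE', f, hf⟩ := winnable_of_rank (H.induce (insert v B)) ⟨v, hvS⟩ D
    (fun x => E x.1) (fun x => hE x.1) hdeg
  have hA : ∀ w, w ∉ insert v B → w ∈ A := by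
    intro w hw
    rw [Finset.mem_insert, not_or] at hw
    have : w ∈ A ∪ B := by rw [hAB]; simp [hw.1]
    rcases Finset.mem_union.mp this with h | h
    · exact h
    · exact absurd h hw.2
  set g : V → ℤ := fun w => if h : w ∈ insert v B then f ⟨w, h⟩ else f ⟨v, hvS⟩ with hg
  have hgS : ∀ x : {x // x ∈ insert v B}, g x.1 = f x := fun x => by
    simp only [hg]; rw [dif_pos x.2]
  have hgA : ∀ w, w ∉ insert v B → g w = g v := fun w hw => by
    simp only [hg]; rw [dif_neg hw, dif_pos hvS]
  refine ⟨_, ?_, g, rfl⟩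
  intro w
  rw [Pi.sub_apply]
  by_cases hw : w ∈ insert v B
  · have hl : H.laplacian g w = (H.induce (insert v B)).laplacian f ⟨w, hw⟩ := by
      unfold Multigraph.laplacian
      have h1 : ∑ u, (H.mult w u : ℤ) * (g w - g u)
          = ∑ u ∈ insert v B, (H.mult w u : ℤ) * (g w - g u) := by
        symm
        refine Finset.sum_subset (Finset.subset_univ _) fun u _ hu => ?_
        rcases Finset.mem_insert.mp hw with rfl | hwB
        · rw [hgA u hu]; ring
        · rw [H.symm, hnoedge u (hA u hu) w hwB]; simp
      rw [h1, ← Finset.sum_coe_sort]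
      refine Finset.sum_congr rfl fun u _ => ?_
      rw [hgS u, hgS ⟨w, hw⟩]
      rfl
    have h2 := hE' ⟨w, hw⟩
    rw [hf, Pi.sub_apply] at h2
    have h3 := hDF ⟨w, hw⟩
    rw [hl]
    dsimp only at h2 h3 ⊢
    linarith
  · have hl : H.laplacian g w = 0 := by
      unfold Multigraph.laplacian
      refine Finset.sum_eq_zero fun u _ => ?_
      by_cases hu : u ∈ insert v B
      · rcases Finset.mem_insert.mp hu with rfl | huB
        · rw [hgA w hw]; ring
        · rw [hnoedge w (hA w hw) u huB]; simp
      · rw [hgA w hw, hgA u hu]; ring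
    rw [hl, hEsupp w hw]
    have := hF w
    linarith
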